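/- Let A ∈ ℤ∖{0,±1} be a cube-free integer, let α ∈ ℤ[ζ₃] be a nonzero cube-free integer, and let q be a prime element of ℤ[ζ₃] such that q‖A (q divides A but q² does not), q does not divide 3, and q²‖α (q² divides α but q³ does not). Then C_{A,α}(k_q) ≠ ∅ if and only if the image of (A/q)·(α/q²) in the residue field 𝔽_q = ℤ[ζ₃]/(q) is a cube in 𝔽_q. -/

import Mathlib

open NumberField IsDedekindDomain

/-- The height-one prime of a Dedekind domain determined by a prime element. -/
noncomputable def primeSpec {R : Type*} [CommRing R] [IsDomain R] [IsDedekindDomain R]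
    {q : R} (hq : Prime q) : HeightOneSpectrum R where
  asIdeal := Ideal.span {q}
  isPrime := (Ideal.span_singleton_prime hq.ne_zero).mpr hq
  ne_bot := by simpa [Ne, Ideal.span_singleton_eq_bot] using hq.ne_zero

/-!
The substitution `y = q * w`, followed by multiplication by `β / q`, turns the curve into
`ϖ * x ^ 3 + w ^ 3 = B * β * z ^ 3` with `ϖ = q * β ^ 2` a uniformizer of `k_q`. The two terms on
the left have valuations that differ modulo `3`, so they cannot cancel: in a nontrivial solution
`z ≠ 0`, and `(w / z) ^ 3` is congruent to the unit `B * β`. As `3` is a unit, Hensel's lemma makes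
this equivalent to `B * β` being a cube in `k_q`, and also to its being a cube in the residue field,
since `𝓞 K` is dense in the ring of integers of `k_q`.
-/

open Polynomial
open scoped Valued WithZero

lemma valuation_pow_sub_pow_lt_one {F Γ₀ : Type*} [Field F] [LinearOrderedCommGroupWithZero Γ₀]
    (v : Valuation F Γ₀) {x y : F} (hx : v x ≤ 1) (hy : v y ≤ 1) (hxy : v (x - y) < 1) (n : ℕ) :
    v (x ^ n - y ^ n) < 1 := by
  obtain ⟨d, hd⟩ := sub_dvd_pow_sub_pow (⟨x, hx⟩ : v.integer) ⟨y, hy⟩ n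
  have hd : x ^ n - y ^ n = (x - y) * d := congrArg Subtype.val hd
  rw [hd, map_mul]
  exact mul_lt_one_of_lt_of_le hxy d.2

section CompleteValuedField

variable {F Γ₀ : Type*} [Field F] [LinearOrderedCommGroupWithZero Γ₀] [Valued F Γ₀]

lemma mem_span_singleton_pow_iff_valued_le (ϖ x : 𝒪[F]) (n : ℕ) :
    x ∈ Ideal.span {ϖ} ^ n ↔ Valued.v (x : F) ≤ Valued.v (ϖ : F) ^ n := by
  rw [Ideal.span_singleton_pow, Ideal.mem_span_singleton,
    (Valuation.integer.integers (Valued.v : Valuation F Γ₀)).dvd_iff_le]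
  simp only [map_pow]
  rfl

lemma isOpen_span_singleton_pow {ϖ : 𝒪[F]} (hϖ : ϖ ≠ 0) (n : ℕ) :
    IsOpen ((Ideal.span {ϖ} ^ n : Ideal 𝒪[F]) : Set 𝒪[F]) := by
  have hϖn : Valued.v.restrict ((ϖ : F) ^ n) ≠ 0 := by simp [hϖ]
  convert (Valued.isOpen_closedBall F hϖn).preimage continuous_subtype_val using 1
  ext x
  simp only [SetLike.mem_coe, mem_span_singleton_pow_iff_valued_le, Set.mem_preimage,
    Set.mem_ofPred_eq, ← map_pow, Valuation.restrict_le_iff]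

variable [MulArchimedean Γ₀]

lemma isAdic_span_singleton_of_valued_lt_one {ϖ : 𝒪[F]} (hϖ : ϖ ≠ 0)
    (hϖ1 : Valued.v (ϖ : F) < 1) : IsAdic (Ideal.span {ϖ}) := by
  refine isAdic_iff.2 ⟨isOpen_span_singleton_pow hϖ, fun s hs => ?_⟩
  obtain ⟨t, ht, hts⟩ := mem_nhds_subtype _ _ _ |>.1 hs
  obtain ⟨γ, hγ⟩ := Valued.mem_nhds_zero.1 ht
  obtain ⟨n, hn⟩ := exists_pow_lt₀ hϖ1
    (Units.map (MonoidWithZeroHom.ValueGroup₀.embedding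
      (f := .ofClass (Valued.v : Valuation F Γ₀)) : _ →* Γ₀) γ)
  refine ⟨n, fun x hx => hts (hγ ?_)⟩
  rw [SetLike.mem_coe, mem_span_singleton_pow_iff_valued_le] at hx
  exact (Valuation.restrict_lt_iff_lt_embedding _).2 (hx.trans_lt hn)

variable [CompleteSpace F]

lemma isAdicComplete_span_singleton_of_valued_lt_one {ϖ : 𝒪[F]} (hϖ : ϖ ≠ 0)
    (hϖ1 : Valued.v (ϖ : F) < 1) : IsAdicComplete (Ideal.span {ϖ}) 𝒪[F] := by
  have : IsUniformAddGroup 𝒪[F] := inferInstanceAs (IsUniformAddGroup 𝒪[F].toAddSubgroup)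
  exact (isAdic_span_singleton_of_valued_lt_one hϖ hϖ1).isAdicComplete_iff.2
    ⟨(Valued.isClosed_integer F).completeSpace_coe, inferInstance⟩

-- Hensel's lemma for `X ^ n - b` at `c`, relative to the ideal generated by the error
-- `c ^ n - b` itself, so that no uniformizer is needed.
lemma exists_pow_eq_of_valued_sub_pow_lt_one {n : ℕ} {b c : F}
    (hn : Valued.v (n : F) = 1) (hb : Valued.v b = 1) (hbc : Valued.v (b - c ^ n) < 1) :
    ∃ t : F, t ^ n = b := by
  rcases eq_or_ne (c ^ n) b with hcb | hcb
  · exact ⟨c, hcb⟩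
  have hn0 : n ≠ 0 := by rintro rfl; simp at hn
  have hcb_lt : Valued.v (c ^ n - b) < 1 := by rwa [Valuation.map_sub_swap]
  have hc : Valued.v c = 1 := by
    have hcn : Valued.v (c ^ n) = 1 :=
      (Valuation.map_eq_of_sub_lt _ (hcb_lt.trans_eq hb.symm)).trans hb
    rwa [map_pow, pow_eq_one_iff_of_nonneg zero_le hn0] at hcn
  let b' : 𝒪[F] := ⟨b, hb.le⟩
  let c' : 𝒪[F] := ⟨c, hc.le⟩
  have := isAdicComplete_span_singleton_of_valued_lt_one (ϖ := c' ^ n - b')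
    (sub_ne_zero.2 fun h => hcb (congrArg Subtype.val h))
    hcb_lt
  have hderiv : Valued.v (((X ^ n - C b').derivative.eval c' : 𝒪[F]) : F) = 1 := by
    simp [c', derivative_X_pow, hc, hn]
  have hunit : IsUnit ((X ^ n - C b').derivative.eval c') :=
    (Valuation.integer.integers _).isUnit_of_one' hderiv
  obtain ⟨t, ht, -⟩ := HenselianRing.is_henselian (I := Ideal.span {c' ^ n - b'})
    (X ^ n - C b') (monic_X_pow_sub_C _ hn0) c'
    (by simp) (hunit.map _)
  have ht : t ^ n = b' := by simpa [sub_eq_zero] using ht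
  exact ⟨t, congrArg Subtype.val ht⟩

end CompleteValuedField

section DiagonalCurve

/-- Solvability of the diagonal plane curve `a x ^ n + b y ^ n = c z ^ n`: it has a point with
homogeneous coordinates in `F`, that is, a solution other than `(0, 0, 0)`. -/
def DiagonalSolvable {F : Type*} [Field F] (n : ℕ) (a b c : F) : Prop :=
  ∃ x y z : F, ¬(x = 0 ∧ y = 0 ∧ z = 0) ∧ a * x ^ n + b * y ^ n = c * z ^ n

lemma exp_neg_one_mul_pow_eq_pow_iff {n : ℕ} (hn : 1 < n) {s t : ℤᵐ⁰} :
    WithZero.exp (-1 : ℤ) * s ^ n = t ^ n ↔ s = 0 ∧ t = 0 := by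
  have hn0 : n ≠ 0 := by omega
  constructor
  · intro h
    have hs : s = 0 := by
      by_contra hs
      have hlog : -1 + n * s.log = n * t.log := by
        simpa [WithZero.log_mul, hs, WithZero.log_pow] using congrArg WithZero.log h
      have hdvd : (n : ℤ) ∣ 1 := ⟨s.log - t.log, by linear_combination -hlog⟩
      have := Int.le_of_dvd one_pos hdvd
      omega
    rw [hs, zero_pow hn0, mul_zero] at h
    exact ⟨hs, (pow_eq_zero_iff hn0).1 h.symm⟩
  · rintro ⟨rfl, rfl⟩
    rw [zero_pow hn0, mul_zero]

variable {F : Type*} [Field F]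

lemma valuation_uniformizer_mul_pow_add_pow (v : Valuation F ℤᵐ⁰) {n : ℕ} (hn : 1 < n) {ϖ : F}
    (hϖ : v ϖ = WithZero.exp (-1)) (x y : F) :
    v (ϖ * x ^ n + y ^ n) = max (v (ϖ * x ^ n)) (v (y ^ n)) := by
  rcases eq_or_ne x 0 with rfl | hx
  · simp [zero_pow (by omega : n ≠ 0)]
  · refine v.map_add_of_distinct_val fun h => hx ?_
    rw [map_mul, map_pow, map_pow, hϖ, exp_neg_one_mul_pow_eq_pow_iff hn] at h
    exact v.zero_iff.1 h.1

lemma exists_valuation_sub_pow_lt_one_of_diagonalSolvable (v : Valuation F ℤᵐ⁰) {n : ℕ}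
    (hn : 1 < n) {ϖ b : F} (hϖ : v ϖ = WithZero.exp (-1)) (hb : v b = 1)
    (h : DiagonalSolvable n ϖ 1 b) : ∃ t : F, v (b - t ^ n) < 1 := by
  obtain ⟨x, y, z, hne, h⟩ := h
  have hn0 : n ≠ 0 := by omega
  have hϖ0 : ϖ ≠ 0 := by rintro rfl; exact WithZero.exp_ne_zero (hϖ.symm.trans v.map_zero)
  rw [one_mul] at h
  have hmax : max (v (ϖ * x ^ n)) (v (y ^ n)) = v z ^ n := by
    rw [← valuation_uniformizer_mul_pow_add_pow v hn hϖ, h, map_mul, hb, one_mul, map_pow]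
  have hz : z ≠ 0 := by
    rintro rfl
    refine hne ?_
    simpa [hn0, hϖ0] using max_le_iff.1 hmax.le
  have hlt : v (ϖ * x ^ n) < v z ^ n := by
    refine (le_max_left _ _ |>.trans hmax.le).lt_of_ne fun heq => ?_
    rw [map_mul, map_pow, hϖ, exp_neg_one_mul_pow_eq_pow_iff hn] at heq
    exact hz (v.zero_iff.1 heq.2)
  refine ⟨y / z, ?_⟩
  have hsub : b - (y / z) ^ n = ϖ * x ^ n / z ^ n := by
    have hzn := pow_ne_zero n hz
    rw [div_pow]
    field_simp
    linear_combination -h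
  rw [hsub, map_div₀, map_pow v z]
  exact (div_lt_one₀ (pow_pos (zero_lt_iff.2 (v.ne_zero_iff.2 hz)) n)).2 hlt

lemma diagonalSolvable_uniformizer_iff_exists_pow_eq [Valued F ℤᵐ⁰] [CompleteSpace F] {n : ℕ}
    (hn1 : 1 < n) (hn : Valued.v (n : F) = 1) {ϖ b : F}
    (hϖ : Valued.v ϖ = WithZero.exp (-1 : ℤ)) (hb : Valued.v b = 1) :
    DiagonalSolvable n ϖ 1 b ↔ ∃ t : F, t ^ n = b := by
  constructor
  · intro h
    obtain ⟨c, hc⟩ := exists_valuation_sub_pow_lt_one_of_diagonalSolvable Valued.v hn1 hϖ hb h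
    exact exists_pow_eq_of_valued_sub_pow_lt_one hn hb hc
  · rintro ⟨t, rfl⟩
    exact ⟨0, t, 1, by simp, by simp [zero_pow (by omega : n ≠ 0)]⟩

lemma diagonalSolvable_sq_mul_iff {q β : F} (hq : q ≠ 0) (hβ : β ≠ 0) (B : F) :
    DiagonalSolvable 3 (q ^ 2 * β) (q ^ 2 * β)⁻¹ (q * B) ↔
      DiagonalSolvable 3 (q * β ^ 2) 1 (B * β) := by
  constructor
  · rintro ⟨x, y, z, hne, h⟩
    refine ⟨x, y / q, z, by simpa [hq] using hne, ?_⟩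
    field_simp at h ⊢
    linear_combination h
  · rintro ⟨x, w, z, hne, h⟩
    refine ⟨x, q * w, z, by simpa [hq] using hne, ?_⟩
    field_simp
    linear_combination h

end DiagonalCurve

section AdicCompletion

variable {R : Type*} [CommRing R] [IsDedekindDomain R] {K : Type*} [Field K] [Algebra R K]
  [IsFractionRing R K] (v : HeightOneSpectrum R)

lemma valued_adicCompletion_algebraMap (r : R) :
    Valued.v (algebraMap R (v.adicCompletion K) r) = v.intValuation r :=
  (v.valuedAdicCompletion_eq_valuation r).trans (v.valuation_of_algebraMap r)

lemma valued_adicCompletion_algebraMap_eq_one_iff {r : R} :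
    Valued.v (algebraMap R (v.adicCompletion K) r) = 1 ↔ r ∉ v.asIdeal := by
  rw [valued_adicCompletion_algebraMap, v.intValuation_eq_one_iff]

lemma exists_valued_algebraMap_sub_lt_one {t : v.adicCompletion K} (ht : Valued.v t ≤ 1) :
    ∃ a : R, Valued.v (algebraMap R (v.adicCompletion K) a - t) < 1 := by
  have hball : {x : v.adicCompletion K | Valued.v (x - t) < 1} ∈ nhds t :=
    (Valued.mem_nhds).2 ⟨1, fun x hx => (Valuation.restrict_lt_one_iff _).1 hx⟩
  obtain ⟨k, hk⟩ := (HeightOneSpectrum.denseRange_algebraMap K v).mem_nhds hball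
  have hk1 : v.valuation K k ≤ 1 := by
    rw [← v.valuedAdicCompletion_eq_valuation', ← sub_add_cancel (k : v.adicCompletion K) t]
    exact Valuation.map_add_le _ (le_of_lt hk) ht
  obtain ⟨a, ha⟩ := v.exists_valuation_sub_lt_of_integer hk1 1
  rw [← v.valuedAdicCompletion_eq_valuation'] at ha
  have hka : algebraMap R (v.adicCompletion K) a - t =
      algebraMap K (v.adicCompletion K) (algebraMap R K a - k) +
        (algebraMap K (v.adicCompletion K) k - t) := by
    rw [map_sub, ← IsScalarTower.algebraMap_apply, sub_add_sub_cancel]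
  exact ⟨a, hka ▸ Valuation.map_add_lt _ ha hk⟩

variable (K) in
lemma exists_pow_eq_algebraMap_adicCompletion_iff {n : ℕ} (hn : (n : R) ∉ v.asIdeal) {b : R}
    (hb : b ∉ v.asIdeal) :
    (∃ t : v.adicCompletion K, t ^ n = algebraMap R (v.adicCompletion K) b) ↔
      ∃ c : R ⧸ v.asIdeal, Ideal.Quotient.mk v.asIdeal b = c ^ n := by
  have hb1 : Valued.v (algebraMap R (v.adicCompletion K) b) = 1 :=
    (valued_adicCompletion_algebraMap_eq_one_iff v).2 hb
  have hn1 : Valued.v (n : v.adicCompletion K) = 1 := by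
    rwa [← map_natCast (algebraMap R _), valued_adicCompletion_algebraMap_eq_one_iff]
  have hmk (c : R) : Ideal.Quotient.mk v.asIdeal b = Ideal.Quotient.mk v.asIdeal c ^ n ↔
      Valued.v (algebraMap R (v.adicCompletion K) b - algebraMap R _ c ^ n) < 1 := by
    rw [← map_pow, ← map_pow, ← map_sub, valued_adicCompletion_algebraMap, Ideal.Quotient.eq,
      v.intValuation_lt_one_iff_mem]
  constructor
  · rintro ⟨t, ht⟩
    have hn0 : n ≠ 0 := by rintro rfl; simp at hn
    have ht1 : Valued.v t ≤ 1 := by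
      rw [← pow_le_one_iff hn0, ← map_pow, ht, hb1]
    obtain ⟨c, hc⟩ := exists_valued_algebraMap_sub_lt_one v ht1
    refine ⟨Ideal.Quotient.mk _ c, (hmk c).2 ?_⟩
    have hc1 : Valued.v (algebraMap R (v.adicCompletion K) c) ≤ 1 := by
      rw [valued_adicCompletion_algebraMap]
      exact v.intValuation_le_one c
    rw [← ht, Valuation.map_sub_swap]
    exact valuation_pow_sub_pow_lt_one _ hc1 ht1 hc n
  · rintro ⟨c, hc⟩
    obtain ⟨c, rfl⟩ := Ideal.Quotient.mk_surjective c
    exact exists_pow_eq_of_valued_sub_pow_lt_one hn1 hb1 ((hmk c).1 hc)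

end AdicCompletion

theorem stmt4_general {R : Type*} [CommRing R] [IsDedekindDomain R] {K : Type*} [Field K]
    [Algebra R K] [IsFractionRing R K] {q : R} (hq : Prime q) (hq3 : ¬ q ∣ (3 : R))
    (A α B β : R) (hAB : A = q * B) (hqB : ¬ q ∣ B) (hαβ : α = q ^ 2 * β) (hqβ : ¬ q ∣ β) :
    (∃ x y z : (primeSpec hq).adicCompletion K,
        ¬(x = 0 ∧ y = 0 ∧ z = 0) ∧
        algebraMap R ((primeSpec hq).adicCompletion K) α * x ^ 3
          + (algebraMap R ((primeSpec hq).adicCompletion K) α)⁻¹ * y ^ 3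
          = algebraMap R ((primeSpec hq).adicCompletion K) A * z ^ 3)
      ↔ ∃ c : R ⧸ Ideal.span {q},
          Ideal.Quotient.mk (Ideal.span {q}) (B * β) = c ^ 3 := by
  let v := primeSpec hq
  let ι := algebraMap R (v.adicCompletion K)
  have hmem {r : R} (hr : ¬ q ∣ r) : r ∉ v.asIdeal :=
    mt Ideal.mem_span_singleton.1 hr
  have hunit {r : R} (hr : ¬ q ∣ r) : Valued.v (ι r) = 1 :=
    (valued_adicCompletion_algebraMap_eq_one_iff v).2 (hmem hr)
  have hBβ : ¬ q ∣ B * β := hq.not_dvd_mul hqB hqβ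
  have hvq : Valued.v (ι q) = WithZero.exp (-1 : ℤ) := by
    rw [valued_adicCompletion_algebraMap, v.intValuation_singleton hq.ne_zero rfl]
  have hϖ : Valued.v (ι q * ι β ^ 2) = WithZero.exp (-1 : ℤ) := by
    rw [map_mul, map_pow, hunit hqβ, one_pow, mul_one, hvq]
  have hq0 : ι q ≠ 0 := by rw [← Valued.v.ne_zero_iff, hvq]; exact WithZero.exp_ne_zero
  have hβ0 : ι β ≠ 0 := by rw [← Valued.v.ne_zero_iff, hunit hqβ]; exact one_ne_zero
  have h3 : Valued.v ((3 : ℕ) : v.adicCompletion K) = 1 := by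
    simpa only [ι, map_ofNat, Nat.cast_ofNat] using hunit hq3
  calc
    _ ↔ DiagonalSolvable 3 (ι q ^ 2 * ι β) (ι q ^ 2 * ι β)⁻¹ (ι q * ι B) := by
      simp only [hAB, hαβ, map_mul, map_pow, DiagonalSolvable, ι, v]
    _ ↔ DiagonalSolvable 3 (ι q * ι β ^ 2) 1 (ι B * ι β) :=
      diagonalSolvable_sq_mul_iff hq0 hβ0 _
    _ ↔ ∃ t, t ^ 3 = ι (B * β) := by
      rw [← map_mul]
      exact diagonalSolvable_uniformizer_iff_exists_pow_eq (by norm_num) h3 hϖ (hunit hBβ)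
    _ ↔ _ := exists_pow_eq_algebraMap_adicCompletion_iff K v
      (by exact_mod_cast hmem hq3) (hmem hBβ)

/-- Lemma 2.3, case `q² ‖ α`: if `A ∈ ℤ ∖ {0, ±1}` is cube-free,
`α ∈ ℤ[ζ₃]` is a nonzero cube-free integer, and `q` is a prime of `ℤ[ζ₃]` with `q ‖ A`,
`q ∤ 3` and `q² ‖ α`, say `A = q·B` and `α = q²·β` with `q ∤ B`, `q ∤ β`, then
`C_{A,α}(k_q) ≠ ∅` iff the image of `(A/q)·(α/q²)` in the residue field `ℤ[ζ₃]/(q)` is a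
cube. -/
theorem stmt4 (K : Type*) [Field K] [NumberField K] [IsCyclotomicExtension {3} ℚ K]
    (A : ℤ) (hA0 : A ≠ 0) (hA1 : A ≠ 1) (hA1' : A ≠ -1)
    (hAcf : ∀ p : ℤ, Prime p → ¬ p ^ 3 ∣ A)
    (α : 𝓞 K) (hα0 : α ≠ 0) (hαcf : ∀ p : 𝓞 K, Prime p → ¬ p ^ 3 ∣ α)
    (q : 𝓞 K) (hq : Prime q) (hq3 : ¬ q ∣ (3 : 𝓞 K))
    (B β : 𝓞 K)
    (hAB : (A : 𝓞 K) = q * B) (hqB : ¬ q ∣ B)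
    (hαβ : α = q ^ 2 * β) (hqβ : ¬ q ∣ β) :
    (∃ x y z : (primeSpec hq).adicCompletion K,
        ¬(x = 0 ∧ y = 0 ∧ z = 0) ∧
        algebraMap (𝓞 K) ((primeSpec hq).adicCompletion K) α * x ^ 3
          + (algebraMap (𝓞 K) ((primeSpec hq).adicCompletion K) α)⁻¹ * y ^ 3
          = algebraMap K ((primeSpec hq).adicCompletion K) (A : K) * z ^ 3)
      ↔ ∃ c : 𝓞 K ⧸ Ideal.span {q},
          Ideal.Quotient.mk (Ideal.span {q}) (B * β) = c ^ 3 := by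
  have hA : algebraMap K ((primeSpec hq).adicCompletion K) (A : K) =
      algebraMap (𝓞 K) ((primeSpec hq).adicCompletion K) (A : 𝓞 K) := by
    rw [map_intCast, map_intCast]
  rw [hA]
  exact stmt4_general (K := K) hq hq3 (A : 𝓞 K) α B β hAB hqB hαβ hqβ
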